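/- There exists an 𝔽_2-linear subspace C of 𝔽_2^{101} of dimension 28 such that every nonzero element of C has Hamming weight at least 28. -/

import Mathlib

/-!
The code has length `100` and is extended by zeros. Its coordinates form four blocks of `25`, and
it is invariant under the cyclic shift of the blocks. A word of weight less than `28 = 4 * 7` has a
block of weight at most `6`, which a shift moves to block `0`. On `24` coordinates of block `0` the
code is systematic, with a `4`-dimensional subcode vanishing on block `0`, so such a word is a sum
of a word of that subcode and at most six of `24` rows. These finitely many words are all examined
by computation: their weights are the digits of one large number, obtained by adding up one number
per coordinate, and a single bitwise conjunction compares all the digits with `28`.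
-/

open Matrix

namespace BinaryCode

section HammingNorm

variable {K ι κ : Type*} [DecidableEq K] [Fintype ι] [Fintype κ]

theorem hammingNorm_comp_le [Zero K] {e : ι → κ} (he : e.Injective)
    (v : κ → K) : hammingNorm (v ∘ e) ≤ hammingNorm v :=
  Finset.card_le_card_of_injOn e (by simp [Set.MapsTo]) he.injOn

theorem hammingNorm_eq_sum [Zero K] (v : ι → K) :
    hammingNorm v = ∑ i, if v i = 0 then 0 else 1 := by
  simp only [hammingNorm, Finset.card_filter, ne_eq, ite_not]

theorem hammingNorm_eq_sum_blocks [Zero K] (v : ι × κ → K) :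
    hammingNorm v = ∑ j, hammingNorm fun x => v (j, x) := by
  simp only [hammingNorm_eq_sum, Fintype.sum_prod_type]

theorem hammingNorm_vecCons [Zero K] {n : ℕ} (x : K) (v : Fin n → K) :
    hammingNorm (vecCons x v) = (if x = 0 then 0 else 1) + hammingNorm v := by
  simp only [hammingNorm_eq_sum, Fin.sum_univ_succ, cons_val_zero, cons_val_succ]
  rfl

theorem exists_submodule_of_embedding [Semiring K] (e : ι ↪ κ) {d : ℕ}
    {C : Submodule K (ι → K)} (hC : ∀ v ∈ C, v ≠ 0 → d ≤ hammingNorm v) :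
    ∃ D : Submodule K (κ → K), Module.finrank K D = Module.finrank K C ∧
      ∀ v ∈ D, v ≠ 0 → d ≤ hammingNorm v := by
  let extend := Function.ExtendByZero.linearMap K e
  have extend_comp (v : ι → K) : extend v ∘ e = v := Function.extend_comp e.injective v 0
  have extend_injective : Function.Injective extend :=
    Function.LeftInverse.injective (g := (· ∘ e)) extend_comp
  refine ⟨C.map extend, (C.equivMapOfInjective extend extend_injective).finrank_eq.symm, ?_⟩
  rintro _ ⟨v, hv, rfl⟩ hne
  calc d ≤ hammingNorm v := hC v hv fun h => hne (by rw [h, map_zero])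
    _ = hammingNorm (extend v ∘ e) := by rw [extend_comp]
    _ ≤ hammingNorm (extend v) := hammingNorm_comp_le e.injective _

end HammingNorm

section BlockShift

variable {J κ : Type*} [AddGroup J]

/-- The permutation of the coordinates of a word made of blocks indexed by `J` that translates the
block index: block `i` of `v ∘ blockShift j` is block `i + j` of `v`. -/
def blockShift (j : J) : Equiv.Perm (J × κ) :=
  (Equiv.addRight j).prodCongr (Equiv.refl κ)

theorem le_hammingNorm_of_blockShift_mem {K : Type*} [Zero K] [DecidableEq K] [Fintype J]
    [Fintype κ] {C : Set (J × κ → K)} (hshift : ∀ j, ∀ v ∈ C, v ∘ blockShift j ∈ C)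
    {d k : ℕ} (hd : d ≤ Fintype.card J * (k + 1))
    (hlight : ∀ v ∈ C, v ≠ 0 → hammingNorm (fun x => v (0, x)) ≤ k → d ≤ hammingNorm v)
    {v : J × κ → K} (hv : v ∈ C) (hne : v ≠ 0) : d ≤ hammingNorm v := by
  by_contra! hlt
  obtain ⟨j, -, hj⟩ : ∃ j ∈ Finset.univ, hammingNorm (fun x => v (j, x)) < k + 1 := by
    apply Finset.exists_lt_of_sum_lt
    rw [← hammingNorm_eq_sum_blocks, Finset.sum_const, Finset.card_univ, smul_eq_mul]
    exact hlt.trans_le hd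
  have shifted_ne : v ∘ blockShift j ≠ 0 := fun h =>
    hne ((blockShift j).surjective.injective_comp_right (h.trans (Pi.zero_comp _).symm))
  have shifted_light : hammingNorm (fun x => (v ∘ blockShift j) (0, x)) ≤ k := by
    simpa [blockShift] using Nat.le_of_lt_succ hj
  exact hlt.not_ge <| (hlight _ (hshift j v hv) shifted_ne shifted_light).trans
    (hammingNorm_comp_le (blockShift j).injective v)

end BlockShift

section GeneratorMatrix

variable {K m ι : Type*} [Fintype m] [Semiring K] {H : Matrix m ι K}

theorem comp_mem_range_vecMulLinear {σ : ι → ι} {A : Matrix m m K}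
    (hA : H.submatrix id σ = A * H) {v : ι → K} (hv : v ∈ LinearMap.range H.vecMulLinear) :
    v ∘ σ ∈ LinearMap.range H.vecMulLinear := by
  obtain ⟨c, rfl⟩ := hv
  refine ⟨c ᵥ* A, ?_⟩
  calc (c ᵥ* A) ᵥ* H = c ᵥ* H.submatrix id σ := by rw [vecMul_vecMul, hA]
    _ = (c ᵥ* H) ∘ σ := rfl

theorem vecMul_comp_of_submatrix_eq_one [DecidableEq m] {p : m → ι} (hp : H.submatrix id p = 1)
    (c : m → K) : (c ᵥ* H) ∘ p = c :=
  calc (c ᵥ* H) ∘ p = c ᵥ* H.submatrix id p := rfl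
    _ = c := by rw [hp, vecMul_one]

theorem finrank_range_vecMulLinear_of_submatrix_eq_one [StrongRankCondition K] [DecidableEq m]
    {p : m → ι} (hp : H.submatrix id p = 1) :
    Module.finrank K (LinearMap.range H.vecMulLinear) = Fintype.card m := by
  have encode_injective : Function.Injective H.vecMulLinear :=
    Function.LeftInverse.injective (g := (· ∘ p)) (vecMul_comp_of_submatrix_eq_one hp)
  rw [LinearMap.finrank_range_of_inj encode_injective, Module.finrank_fintype_fun_eq_card]

end GeneratorMatrix

section OfDigits

theorem ofDigits_map_sum {α ι : Type*} [Fintype ι] (B : ℕ) (L : List α) (g : α → ι → ℕ) :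
    Nat.ofDigits B (L.map fun x => ∑ i, g x i) = ∑ i, Nat.ofDigits B (L.map fun x => g x i) := by
  induction L with
  | nil => simp
  | cons x L ih =>
    simp only [List.map_cons, Nat.ofDigits_cons, ih, Finset.sum_add_distrib, Finset.mul_sum]

theorem ofDigits_map_add {α : Type*} (B : ℕ) (L : List α) (g h : α → ℕ) :
    Nat.ofDigits B (L.map fun x => g x + h x) =
      Nat.ofDigits B (L.map g) + Nat.ofDigits B (L.map h) := by
  simpa using ofDigits_map_sum B L fun x (i : Bool) => if i then g x else h x

theorem ofDigits_cons_div {B w : ℕ} (hw : w < B) (L : List ℕ) :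
    Nat.ofDigits B (w :: L) / B = Nat.ofDigits B L := by
  rw [Nat.ofDigits_cons, Nat.add_mul_div_left _ _ (by lia), Nat.div_eq_of_lt hw, zero_add]

theorem two_pow_le_of_ofDigits_and_eq {e : ℕ} {L : List ℕ} (hL : ∀ w ∈ L, w < 2 ^ (e + 1))
    (hand : Nat.ofDigits (2 ^ (e + 1)) L &&& Nat.ofDigits (2 ^ (e + 1)) (L.map fun _ => 2 ^ e) =
      Nat.ofDigits (2 ^ (e + 1)) (L.map fun _ => 2 ^ e)) :
    ∀ w ∈ L, 2 ^ e ≤ w := by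
  induction L with
  | nil => simp
  | cons w L ih =>
    have hpow : 2 ^ e < 2 ^ (e + 1) := Nat.pow_lt_pow_succ one_lt_two
    rw [List.forall_mem_cons] at hL ⊢
    rw [List.map_cons] at hand
    constructor
    · have last_digit := congrArg (· % 2 ^ (e + 1)) hand
      simp only [Nat.and_mod_two_pow, Nat.ofDigits_cons, Nat.add_mul_mod_self_left,
        Nat.mod_eq_of_lt hL.1, Nat.mod_eq_of_lt hpow] at last_digit
      exact last_digit ▸ Nat.and_le_left
    · have other_digits := congrArg (· / 2 ^ (e + 1)) hand
      simp only [Nat.and_div_two_pow, ofDigits_cons_div hL.1, ofDigits_cons_div hpow]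
        at other_digits
      exact ih hL.2 other_digits

end OfDigits

section PackedEnumeration

theorem eq_zero_or_eq_one : ∀ x : ZMod 2, x = 0 ∨ x = 1 := by
  decide

theorem one_add_eq_zero_iff : ∀ x : ZMod 2, 1 + x = 0 ↔ x ≠ 0 := by
  decide

/-- The messages of length `n` and Hamming weight at most `k`, in the order in which
`packedColumn` lists them. -/
def lightMessages : (n k : ℕ) → List (Fin n → ZMod 2)
  | 0, _ => [![]]
  | n + 1, 0 => (lightMessages n 0).map (vecCons 0)
  | n + 1, k + 1 =>
      (lightMessages n (k + 1)).map (vecCons 0) ++ (lightMessages n k).map (vecCons 1)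

/-- The length of `lightMessages n k`, computed without listing the messages. -/
def lightMessageCount : ℕ → ℕ → ℕ
  | 0, _ => 1
  | n + 1, 0 => lightMessageCount n 0
  | n + 1, k + 1 => lightMessageCount n (k + 1) + lightMessageCount n k

theorem length_lightMessages (n k : ℕ) : (lightMessages n k).length = lightMessageCount n k := by
  fun_induction lightMessages n k <;> simp_all [lightMessageCount]

theorem exists_lightMessages_eq_zero_cons (n k : ℕ) : ∃ L, lightMessages n k = 0 :: L := by
  fun_induction lightMessages n k with
  | case1 => exact ⟨[], by simp⟩
  | case2 n ih | case3 n k ih =>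
    obtain ⟨L, hL⟩ := ih
    simp [hL]

theorem mem_lightMessages_of_hammingNorm_le {n k : ℕ} {m : Fin n → ZMod 2}
    (hm : hammingNorm m ≤ k) : m ∈ lightMessages n k := by
  induction n generalizing k with
  | zero => simp [lightMessages, Subsingleton.elim m ![]]
  | succ n ih =>
    rw [← cons_head_tail m, hammingNorm_vecCons] at hm
    rw [← cons_head_tail m]
    obtain head_eq | head_eq := eq_zero_or_eq_one (vecHead m)
    · have tail_mem := @ih k (vecTail m) (by simpa [head_eq] using hm)
      cases k <;> simp [lightMessages, head_eq, tail_mem]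
    · have tail_lt : 1 + hammingNorm (vecTail m) ≤ k := by simpa [head_eq] using hm
      obtain ⟨k, rfl⟩ : ∃ l, k = l + 1 := ⟨k - 1, by lia⟩
      have tail_mem := @ih k (vecTail m) (by lia)
      simp [lightMessages, head_eq, tail_mem]

/-- The base-`B` number with one digit per message `m` in `lightMessages n k`, namely `x` if
`m ⬝ᵥ b = 0` and `y` otherwise. Interchanging `x` and `y`, rather than carrying the partial dot
product along, leaves only `O(n * k)` different recursive calls, so that the kernel evaluates this
number without going through the messages. -/
def packedColumn (B : ℕ) : {n : ℕ} → ℕ → ℕ → ℕ → (Fin n → ZMod 2) → ℕ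
  | 0, _, x, _, _ => x
  | _ + 1, 0, x, y, b => packedColumn B 0 x y (vecTail b)
  | n + 1, k + 1, x, y, b => packedColumn B (k + 1) x y (vecTail b) +
      B ^ lightMessageCount n (k + 1) *
        if vecHead b = 0 then packedColumn B k x y (vecTail b)
        else packedColumn B k y x (vecTail b)

theorem packedColumn_eq_ofDigits (B : ℕ) {n : ℕ} (k x y : ℕ) (b : Fin n → ZMod 2) :
    packedColumn B k x y b =
      Nat.ofDigits B ((lightMessages n k).map fun m => if m ⬝ᵥ b = 0 then x else y) := by
  fun_induction packedColumn B k x y b with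
  | case1 => simp [lightMessages]
  | case2 n x y b ih => simp [lightMessages, ih, Function.comp_def]
  | case3 n k x y b ih_zero ih_one ih_one_swap =>
    have digits_one : (if vecHead b = 0 then packedColumn B k x y (vecTail b)
        else packedColumn B k y x (vecTail b)) = Nat.ofDigits B
          ((lightMessages n k).map fun m => if vecCons 1 m ⬝ᵥ b = 0 then x else y) := by
      obtain hb | hb := eq_zero_or_eq_one (vecHead b)
      · simp [hb, ih_one, cons_dotProduct]
      · simp [hb, ih_one_swap, cons_dotProduct, one_add_eq_zero_iff]
    rw [digits_one, ih_zero, lightMessages, List.map_append, Nat.ofDigits_append, List.length_map,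
      List.length_map, length_lightMessages, List.map_map, List.map_map]
    simp only [Function.comp_def, cons_dotProduct, zero_mul, zero_add]

variable {n : ℕ} {ι : Type*} [Fintype ι]

/-- The base-`B` number whose digits are the weights of the words `a + m ᵥ* G` for `m` in
`lightMessages n k`, provided that these weights are less than `B`. -/
def packedWeights (B k : ℕ) (a : ι → ZMod 2) (G : Matrix (Fin n) ι (ZMod 2)) : ℕ :=
  ∑ i, if a i = 0 then packedColumn B k 0 1 (fun r => G r i)
    else packedColumn B k 1 0 (fun r => G r i)

theorem packedWeights_eq_ofDigits (B k : ℕ) (a : ι → ZMod 2) (G : Matrix (Fin n) ι (ZMod 2)) :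
    packedWeights B k a G =
      Nat.ofDigits B ((lightMessages n k).map fun m => hammingNorm (a + m ᵥ* G)) := by
  have word_apply (m : Fin n → ZMod 2) (i : ι) : (if (a + m ᵥ* G) i = 0 then 0 else 1) =
      if a i = 0 then if m ⬝ᵥ (fun r => G r i) = 0 then 0 else 1
      else if m ⬝ᵥ (fun r => G r i) = 0 then 1 else 0 := by
    change (if a i + m ⬝ᵥ (fun r => G r i) = 0 then 0 else 1) = _
    generalize a i = x, m ⬝ᵥ (fun r => G r i) = y
    revert x y
    decide
  simp only [hammingNorm_eq_sum, word_apply, ofDigits_map_sum, packedWeights,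
    packedColumn_eq_ofDigits]
  exact Finset.sum_congr rfl fun i _ => by split_ifs <;> rfl

/-- The base-`B` number with the digit `x` for each message in `lightMessages n k`. -/
def packedConst (B n k x : ℕ) : ℕ :=
  packedColumn B k x x (0 : Fin n → ZMod 2)

theorem packedConst_eq_ofDigits (B n k x : ℕ) :
    packedConst B n k x = Nat.ofDigits B ((lightMessages n k).map fun _ => x) := by
  simp only [packedConst, packedColumn_eq_ofDigits, ite_self]

/-- Tests whether all words `a + m ᵥ* G` with `m ≠ 0` in `lightMessages n k` have weight at least
`d`: adding `2 ^ e - d` to each weight must set bit `e` of its digit. The division by the base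
removes the digit of the message `0`. -/
def weightTest (e k d : ℕ) (a : ι → ZMod 2) (G : Matrix (Fin n) ι (ZMod 2)) : Bool :=
  (packedWeights (2 ^ (e + 1)) k a G + packedConst (2 ^ (e + 1)) n k (2 ^ e - d)) / 2 ^ (e + 1) &&&
      packedConst (2 ^ (e + 1)) n k (2 ^ e) / 2 ^ (e + 1) ==
    packedConst (2 ^ (e + 1)) n k (2 ^ e) / 2 ^ (e + 1)

theorem le_hammingNorm_of_weightTest {e k d : ℕ} {a : ι → ZMod 2} {G : Matrix (Fin n) ι (ZMod 2)}
    (hd : d ≤ 2 ^ e) (hι : Fintype.card ι + (2 ^ e - d) < 2 ^ (e + 1))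
    (htest : weightTest e k d a G = true)
    {m : Fin n → ZMod 2} (hm : m ≠ 0) (hmk : hammingNorm m ≤ k) :
    d ≤ hammingNorm (a + m ᵥ* G) := by
  obtain ⟨L, hL⟩ := exists_lightMessages_eq_zero_cons n k
  have mem_L : m ∈ L := by simpa [hL, hm] using mem_lightMessages_of_hammingNorm_le hmk
  have digit_lt (c : Fin n → ZMod 2) :
      hammingNorm (a + c ᵥ* G) + (2 ^ e - d) < 2 ^ (e + 1) :=
    (Nat.add_le_add_right hammingNorm_le_card_fintype _).trans_lt hι
  have hpow : 2 ^ e < 2 ^ (e + 1) := Nat.pow_lt_pow_succ one_lt_two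
  rw [weightTest, beq_iff_eq, packedWeights_eq_ofDigits, packedConst_eq_ofDigits,
    packedConst_eq_ofDigits, ← ofDigits_map_add, hL, List.map_cons, List.map_cons,
    ofDigits_cons_div (digit_lt 0), ofDigits_cons_div hpow] at htest
  have threshold := two_pow_le_of_ofDigits_and_eq
    (L := L.map fun c => hammingNorm (a + c ᵥ* G) + (2 ^ e - d))
    (by simpa using fun c _ => digit_lt c) (by simpa [Function.comp_def] using htest)
    _ (List.mem_map_of_mem mem_L)
  lia

end PackedEnumeration

section Blocks

/-- The word over `ZMod 2` formed by the binary digits of `a`, least significant digit first. -/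
def bits {t : ℕ} (a : ℕ) : Fin t → ZMod 2 :=
  fun i => if a.testBit i then 1 else 0

theorem bits_zero {t : ℕ} : (bits 0 : Fin t → ZMod 2) = 0 := by
  ext i; simp [bits]

theorem bits_xor {t : ℕ} (a b : ℕ) : (bits (a ^^^ b) : Fin t → ZMod 2) = bits a + bits b := by
  ext i
  simp only [bits, Nat.testBit_xor, Pi.add_apply]
  cases a.testBit i <;> cases b.testBit i <;> decide

variable {m J : Type*} {t : ℕ}

/-- The matrix over `ZMod 2` whose row `r` has the blocks `bits (w r j)`. -/
def ofBlocks (w : m → J → ℕ) : Matrix m (J × Fin t) (ZMod 2) :=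
  fun r p => bits (w r p.1) p.2

variable [Fintype m]

/-- The bitwise sum over `ZMod 2` of a family of numbers. -/
def xorSum (a : m → ℕ) : ℕ :=
  Finset.univ.fold (· ^^^ ·) 0 a

theorem bits_xorSum (a : m → ℕ) : (bits (xorSum a) : Fin t → ZMod 2) = ∑ r, bits (a r) := by
  rw [Finset.sum_eq_fold, ← bits_zero, Finset.fold_hom bits_xor, xorSum]

theorem ofBlocks_submatrix_blockShift [AddGroup J] {w : m → J → ℕ} {p : m → J × Fin t} {j : J}
    (hw : ∀ r i, w r (i + j) = xorSum fun s =>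
      if (w r ((p s).1 + j)).testBit (p s).2 then w s i else 0) :
    (ofBlocks w).submatrix id (blockShift j) =
      (ofBlocks w).submatrix id (blockShift j ∘ p) * (ofBlocks w : Matrix m (J × Fin t) _) := by
  ext r ⟨i, x⟩
  calc bits (w r (i + j)) x
      = ∑ s, bits (if (w r ((p s).1 + j)).testBit (p s).2 then w s i else 0) x := by
        rw [hw, bits_xorSum, Finset.sum_apply]
    _ = ∑ s, bits (w r ((p s).1 + j)) (p s).2 * bits (w s i) x := by
        refine Finset.sum_congr rfl fun s _ => ?_
        split_ifs with h <;> simp [bits, h]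

end Blocks

section Code

/-- The blocks of a basis of the subcode that vanishes on block `0`.

The whole code was found by a computer search among the left ideals of the group algebra of
`ℤ/25 ⋊ ℤ/4`, where `ℤ/4` acts through the element `7` of order four modulo `25`. It is spanned by
the words whose block `j` is the indicator function of `7⁻ʲ * i + {0, 1, 2, 4, 18, 21, 23, 24}`
for some `i : ℤ/25`, and those whose block `j` is the indicator function of the set of all `x`
with `x ≡ 7⁻ʲ * i` or `x ≡ 7⁻ʲ * i + 1` modulo `5`. -/
def vanishingBlocks : Fin 4 → Fin 4 → ℕ :=
  ![![0, 18400817, 9741609, 32472030],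
    ![0, 19483218, 3247203, 18400817],
    ![0, 21648020, 18400817, 6494406],
    ![0, 25977624, 5412005, 31389629]]

/-- The blocks of the basis words that complete `vanishingBlocks` to a basis of the code, reduced
to a single `1` among the first `24` positions of block `0`. -/
def systematicBlocks : Fin 24 → Fin 4 → ℕ :=
  ![![16777217, 7296128, 5082114, 1418670],
    ![16777218, 16461568, 11369359, 16187080],
    ![16777220, 25286912, 6352690, 30402777],
    ![16777224, 21306720, 5011448, 16322412],
    ![16777232, 21559280, 569144, 5513756],
    ![16777248, 22706304, 27697216, 21952815],
    ![16777280, 24454720, 686347, 8800675],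
    ![16777344, 28020544, 188947, 9214836],
    ![16777472, 8616000, 3613692, 16594631],
    ![16777728, 24007280, 5643772, 9356817],
    ![16778240, 15194800, 25052365, 18200011],
    ![16779264, 16519056, 8310140, 21177203],
    ![16781312, 14225776, 27103586, 13520618],
    ![16785408, 8891632, 11716816, 2758316],
    ![16793600, 20643568, 13818342, 19890119],
    ![16809984, 7591616, 33167180, 33084096],
    ![16842752, 11617424, 24014873, 3035509],
    ![16908288, 12227360, 20743554, 17601350],
    ![17039360, 9255264, 33195153, 19388442],
    ![17301504, 13042848, 25248297, 14773974],
    ![17825792, 8028064, 21699738, 9650933],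
    ![18874368, 1580432, 17267089, 16682398],
    ![20971520, 26381248, 20548901, 8003779],
    ![25165824, 1552224, 7120363, 26304793]]

/-- The generator matrix of the code. -/
def generator : Matrix (Fin 4 ⊕ Fin 24) (Fin 4 × Fin 25) (ZMod 2) :=
  ofBlocks (Sum.elim vanishingBlocks systematicBlocks)

/-- An information set of the code: the columns of `generator` that form an identity matrix. -/
def infoPosition : Fin 4 ⊕ Fin 24 → Fin 4 × Fin 25 :=
  Sum.elim (fun i => (1, i.castLE (by lia))) (fun i => (0, i.castSucc))

theorem generator_submatrix_infoPosition : generator.submatrix id infoPosition = 1 := by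
  decide +kernel

theorem generator_submatrix_blockShift (j : Fin 4) :
    generator.submatrix id (blockShift j) =
      generator.submatrix id (blockShift j ∘ infoPosition) * generator := by
  apply ofBlocks_submatrix_blockShift
  revert j
  decide +kernel

theorem vecMul_generator (c : Fin 4 ⊕ Fin 24 → ZMod 2) :
    c ᵥ* generator = (c ∘ Sum.inl) ᵥ* ofBlocks vanishingBlocks +
      (c ∘ Sum.inr) ᵥ* ofBlocks systematicBlocks := by
  have generator_eq :
      generator = fromRows (ofBlocks vanishingBlocks) (ofBlocks systematicBlocks) := by
    ext (r | r) p <;> rfl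
  rw [generator_eq, vecMul_fromRows]

theorem le_hammingNorm_vecMul_vanishingBlocks : ∀ f : Fin 4 → ZMod 2, f ≠ 0 →
    28 ≤ hammingNorm (f ᵥ* (ofBlocks vanishingBlocks : Matrix _ (Fin 4 × Fin 25) _)) := by
  decide +kernel

theorem weightTest_systematicBlocks (f : Fin 4 → ZMod 2) :
    weightTest (ι := Fin 4 × Fin 25) 7 6 28 (f ᵥ* ofBlocks vanishingBlocks)
      (ofBlocks systematicBlocks) := by
  revert f
  decide +kernel

theorem le_hammingNorm_vecMul_generator {c : Fin 4 ⊕ Fin 24 → ZMod 2} (hc : c ≠ 0)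
    (hlight : hammingNorm (c ∘ Sum.inr) ≤ 6) : 28 ≤ hammingNorm (c ᵥ* generator) := by
  rw [vecMul_generator]
  by_cases hm : c ∘ Sum.inr = 0
  · have hf : c ∘ Sum.inl ≠ 0 := fun hf => hc <| by
      rw [← Sum.elim_comp_inl_inr c, hf, hm, Sum.elim_zero_zero]
    rw [hm, zero_vecMul, add_zero]
    exact le_hammingNorm_vecMul_vanishingBlocks _ hf
  · exact le_hammingNorm_of_weightTest (by norm_num) (by simp) (weightTest_systematicBlocks _)
      hm hlight

theorem le_hammingNorm_of_mem_range_generator {v : Fin 4 × Fin 25 → ZMod 2}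
    (hv : v ∈ LinearMap.range generator.vecMulLinear) (hne : v ≠ 0) : 28 ≤ hammingNorm v := by
  refine le_hammingNorm_of_blockShift_mem (k := 6)
    (fun j _ => comp_mem_range_vecMulLinear (generator_submatrix_blockShift j)) (by simp) ?_ hv hne
  rintro _ ⟨c, rfl⟩ hne hlight
  have message_le_block :
      hammingNorm (c ∘ Sum.inr) ≤ hammingNorm fun x => (c ᵥ* generator) (0, x) :=
    calc hammingNorm (c ∘ Sum.inr)
        = hammingNorm (((c ᵥ* generator) ∘ infoPosition) ∘ Sum.inr) := by
          rw [vecMul_comp_of_submatrix_eq_one generator_submatrix_infoPosition]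
      _ = hammingNorm ((fun x => (c ᵥ* generator) (0, x)) ∘ Fin.castSucc) := rfl
      _ ≤ _ := hammingNorm_comp_le (Fin.castSucc_injective 24) _
  exact le_hammingNorm_vecMul_generator (by rintro rfl; simp at hne)
    (message_le_block.trans hlight)

end Code

end BinaryCode

theorem stmt12_general (n : ℕ) (hn : 100 ≤ n) :
    ∃ C : Submodule (ZMod 2) (Fin n → ZMod 2),
      Module.finrank (ZMod 2) C = 28 ∧
      ∀ v ∈ C, v ≠ 0 → 28 ≤ hammingNorm v := by
  obtain ⟨C, hrank, hC⟩ := BinaryCode.exists_submodule_of_embedding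
    (finProdFinEquiv.toEmbedding.trans (Fin.castLEEmb hn))
    fun v => BinaryCode.le_hammingNorm_of_mem_range_generator (v := v)
  refine ⟨C, hrank.trans ?_, hC⟩
  exact BinaryCode.finrank_range_vecMulLinear_of_submatrix_eq_one
    BinaryCode.generator_submatrix_infoPosition

/-- there exists an `𝔽₂`-linear code of length 101, dimension 28
and minimum distance at least 28. -/
theorem stmt12 :
    ∃ C : Submodule (ZMod 2) (Fin 101 → ZMod 2),
      Module.finrank (ZMod 2) C = 28 ∧
      ∀ v ∈ C, v ≠ 0 → 28 ≤ hammingNorm v :=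
  stmt12_general 101 (by norm_num)
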